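/- arXiv:2407.15183 — 2 statements merged into one kernel-verified Lean document; each statement's English description precedes it below -/
import Mathlib

section
/- For every positive integer c with c ≡ 1 (mod 4), there exists an integer Heffter array set IHS(9, 7; c). -/
/-- An integer Heffter array set `IHS(m, n; c)`: a family of `c` totally filled
`m × n` integer arrays such that the absolute values of all `c·m·n` entries are
pairwise distinct and their set is exactly `{1, …, m·n·c}`, and every row and
column of each array sums to `0`. -/
def IsIHS (m n c : ℕ) (A : Fin c → Matrix (Fin m) (Fin n) ℤ) : Prop :=
  Function.Injective (fun p : Fin c × Fin m × Fin n => |A p.1 p.2.1 p.2.2|) ∧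
  (∀ x : ℤ, (1 ≤ x ∧ x ≤ (m : ℤ) * n * c) ↔ ∃ l i j, |A l i j| = x) ∧
  (∀ l i, ∑ j, A l i j = 0) ∧
  (∀ l j, ∑ i, A l i j = 0)

/-!
A Skolem sequence of order `c` splits `{1, …, 2c}` into pairs `{a r, a r + r}`, `1 ≤ r ≤ c`. Cut
`{1, …, 63c}` into `63` blocks of length `c`. In the `r`-th array each cell holds, up to sign, a
number from a fixed block, or from two fixed adjacent blocks, at a position depending on `r`:
it ascends or descends through a block, through the odd or even positions of a double block, or it
is one of `a r`, `a r + r`. As `r` runs over `1, …, c` the cells cover all blocks, and then they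
cover each number only once, by counting. Each entry is a linear form in `1`, `c`, `r` and `a r`,
so that cancellation along the rows and columns is a finite check on coefficients.
-/

theorem injective_and_image_eq_of_subset_image {α β : Type*} [Fintype α] [DecidableEq β]
    {f : α → β} {t : Finset β} (hcard : Fintype.card α ≤ t.card)
    (hsub : t ⊆ Finset.univ.image f) : Function.Injective f ∧ Finset.univ.image f = t := by
  have himage : t = Finset.univ.image f :=
    Finset.eq_of_subset_of_card_le hsub (Finset.card_image_le.trans hcard)
  have hinj : Set.InjOn f (Finset.univ : Finset α) :=
    Finset.card_image_iff.mp (le_antisymm Finset.card_image_le (himage ▸ hcard))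
  exact ⟨fun x y h => hinj (by simp) (by simp) h, himage.symm⟩

theorem IsIHS.of_forall_exists_abs_eq {m n c : ℕ} {A : Fin c → Matrix (Fin m) (Fin n) ℤ}
    (hcover : ∀ x ∈ Finset.Icc (1 : ℤ) (m * n * c), ∃ l i j, |A l i j| = x)
    (hrow : ∀ l i, ∑ j, A l i j = 0) (hcol : ∀ l j, ∑ i, A l i j = 0) : IsIHS m n c A := by
  have hcard : Fintype.card (Fin c × Fin m × Fin n) ≤
      (Finset.Icc (1 : ℤ) (m * n * c)).card := by
    simp only [Fintype.card_prod, Fintype.card_fin, Int.card_Icc, add_sub_cancel_right]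
    exact_mod_cast (mul_comm c (m * n)).le
  obtain ⟨hinj, himage⟩ := injective_and_image_eq_of_subset_image
    (f := fun p : Fin c × Fin m × Fin n => |A p.1 p.2.1 p.2.2|) hcard fun x hx => by
      simpa using hcover x hx
  refine ⟨hinj, fun x => ?_, hrow, hcol⟩
  simpa using (Finset.ext_iff.mp himage x).symm

/-- `a` encodes a Skolem sequence of order `c` by its first positions: the pairs `{a r, a r + r}`
with `1 ≤ r ≤ c` cover `{1, …, 2c}`. By counting, these `c` pairs are then disjoint. -/
def IsSkolem (c : ℤ) (a : ℤ → ℤ) : Prop :=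
  ∀ x ∈ Finset.Icc 1 (2 * c), ∃ r ∈ Finset.Icc 1 c, a r = x ∨ a r + r = x

/-- First positions of Skolem's sequence of order `4 * n`: its pairs are
`{4n - 1 + k, 8n + 1 - k}` for `1 ≤ k ≤ 2n`, `{k, 4n - 1 - k}` for `1 ≤ k ≤ n - 1`,
`{n + 1 + k, 3n - k}` for `1 ≤ k ≤ n - 2`, and `{n, n + 1}`, `{2n, 4n - 1}`, `{2n + 1, 6n}`.
For `n = 1` the pair `{2n, 4n - 1}` is dropped. -/
def skolemFourMul (n r : ℤ) : ℤ :=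
  if r % 2 = 0 then 6 * n - r / 2
  else if r = 1 then n
  else if r = 4 * n - 1 then 2 * n + 1
  else if r = 2 * n - 1 then 2 * n
  else if 2 * n + 1 ≤ r then (4 * n - 1 - r) / 2
  else n + 1 + (2 * n - 1 - r) / 2

/-- First positions of Skolem's sequence of order `4 * n + 1`, for `n ≠ 1`: its pairs are
`{4n + 1 + k, 8n + 3 - k}` for `1 ≤ k ≤ 2n`, `{k, 4n + 1 - k}` for `1 ≤ k ≤ n`,
`{n + 2 + k, 3n + 1 - k}` for `1 ≤ k ≤ n - 2`, and `{n + 1, n + 2}`, `{2n + 1, 6n + 2}`,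
`{2n + 2, 4n + 1}`. For `n = 0` only `{n + 1, n + 2}` is kept. -/
def skolemFourMulAddOne (n r : ℤ) : ℤ :=
  if r % 2 = 0 then 6 * n + 2 - r / 2
  else if r = 1 then n + 1
  else if r = 4 * n + 1 then 2 * n + 1
  else if r = 2 * n - 1 then 2 * n + 2
  else if 2 * n + 1 ≤ r then (4 * n + 1 - r) / 2
  else n + 2 + (2 * n - 1 - r) / 2

theorem isSkolem_skolemFourMul (n : ℤ) : IsSkolem (4 * n) (skolemFourMul n) := by
  intro x hx
  simp only [Finset.mem_Icc, skolemFourMul] at hx ⊢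
  rcases (by omega : x ≤ n - 1 ∨ (x = n ∨ x = n + 1) ∨ (n + 2 ≤ x ∧ x ≤ 2 * n - 1) ∨
      (n ≠ 1 ∧ (x = 2 * n ∨ x = 4 * n - 1)) ∨ (x = 2 * n + 1 ∨ x = 6 * n) ∨
      (2 * n + 2 ≤ x ∧ x ≤ 3 * n - 1) ∨ (3 * n ≤ x ∧ x ≤ 4 * n - 2) ∨
      (4 * n ≤ x ∧ x ≤ 6 * n - 1) ∨ 6 * n + 1 ≤ x) with h | h | h | h | h | h | h | h | h
  · exact ⟨4 * n - 1 - 2 * x, by omega, by split_ifs <;> omega⟩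
  · exact ⟨1, by omega, by split_ifs <;> omega⟩
  · exact ⟨4 * n + 1 - 2 * x, by omega, by split_ifs <;> omega⟩
  · exact ⟨2 * n - 1, by omega, by split_ifs <;> omega⟩
  · exact ⟨4 * n - 1, by omega, by split_ifs <;> omega⟩
  · exact ⟨2 * x - 4 * n - 1, by omega, by split_ifs <;> omega⟩
  · exact ⟨2 * x - 4 * n + 1, by omega, by split_ifs <;> omega⟩
  · exact ⟨12 * n - 2 * x, by omega, by split_ifs <;> omega⟩
  · exact ⟨2 * x - 12 * n, by omega, by split_ifs <;> omega⟩

theorem isSkolem_skolemFourMulAddOne {n : ℤ} (hn : n ≠ 1) :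
    IsSkolem (4 * n + 1) (skolemFourMulAddOne n) := by
  intro x hx
  simp only [Finset.mem_Icc, skolemFourMulAddOne] at hx ⊢
  rcases (by omega : x ≤ n ∨ (x = n + 1 ∨ x = n + 2) ∨ (n + 3 ≤ x ∧ x ≤ 2 * n) ∨
      (x = 2 * n + 1 ∨ x = 6 * n + 2) ∨ (n ≠ 0 ∧ (x = 2 * n + 2 ∨ x = 4 * n + 1)) ∨
      (2 * n + 3 ≤ x ∧ x ≤ 3 * n) ∨ (3 * n + 1 ≤ x ∧ x ≤ 4 * n) ∨
      (4 * n + 2 ≤ x ∧ x ≤ 6 * n + 1) ∨ 6 * n + 3 ≤ x) with h | h | h | h | h | h | h | h | h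
  · exact ⟨4 * n + 1 - 2 * x, by omega, by split_ifs <;> omega⟩
  · exact ⟨1, by omega, by split_ifs <;> omega⟩
  · exact ⟨4 * n + 3 - 2 * x, by omega, by split_ifs <;> omega⟩
  · exact ⟨4 * n + 1, by omega, by split_ifs <;> omega⟩
  · exact ⟨2 * n - 1, by omega, by split_ifs <;> omega⟩
  · exact ⟨2 * x - 4 * n - 3, by omega, by split_ifs <;> omega⟩
  · exact ⟨2 * x - 4 * n - 1, by omega, by split_ifs <;> omega⟩
  · exact ⟨12 * n + 4 - 2 * x, by omega, by split_ifs <;> omega⟩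
  · exact ⟨2 * x - 12 * n - 4, by omega, by split_ifs <;> omega⟩

theorem isSkolem_five : IsSkolem 5 fun r => if r = 2 then 7 else r := by
  unfold IsSkolem
  decide

theorem exists_isSkolem {c : ℤ} (hc : c % 4 = 0 ∨ c % 4 = 1) : ∃ a, IsSkolem c a := by
  rcases hc with hc | hc
  · obtain ⟨n, rfl⟩ : ∃ n, c = 4 * n := ⟨c / 4, by omega⟩
    exact ⟨_, isSkolem_skolemFourMul n⟩
  · obtain ⟨n, rfl⟩ : ∃ n, c = 4 * n + 1 := ⟨c / 4, by omega⟩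
    rcases eq_or_ne n 1 with rfl | hn
    · exact ⟨_, isSkolem_five⟩
    · exact ⟨_, isSkolem_skolemFourMulAddOne hn⟩

/-- How the absolute value in a cell depends on the index `r ∈ {1, …, c}` of the array; see
`Shape.offset`. The shapes `up` and `down` fill a block of length `c`, the others share a double
block of length `2c` with a partner. -/
inductive Shape
  | up | down | odd | oddDown | even | evenDown | fst | snd
  deriving DecidableEq

/-- The position inside its block of the entry of index `r`; the shapes `fst` and `snd` follow a
Skolem sequence with first positions `a`. -/
def Shape.offset (a : ℤ → ℤ) (c r : ℤ) : Shape → ℤ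
  | up => r
  | down => c + 1 - r
  | odd => 2 * r - 1
  | oddDown => 2 * c + 1 - 2 * r
  | even => 2 * r
  | evenDown => 2 * c + 2 - 2 * r
  | fst => a r
  | snd => a r + r

/-- The entries of one position in a family of `c` arrays: block `b` is `{bc + 1, …, bc + c}`. -/
structure Cell where
  sign : ℤˣ
  block : ℕ
  shape : Shape

/-- The integer in the given cell of the array of index `r ∈ {1, …, c}`. -/
def Cell.entry (a : ℤ → ℤ) (c r : ℤ) (p : Cell) : ℤ :=
  p.sign * (p.block * c + p.shape.offset a c r)

/-- The coefficients of `1, c, r, a r` in `Shape.offset a c r`. -/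
def Shape.coeff : Shape → Fin 4 → ℤ
  | up => ![0, 0, 1, 0]
  | down => ![1, 1, -1, 0]
  | odd => ![-1, 0, 2, 0]
  | oddDown => ![1, 2, -2, 0]
  | even => ![0, 0, 2, 0]
  | evenDown => ![2, 2, -2, 0]
  | fst => ![0, 0, 0, 1]
  | snd => ![0, 0, 1, 1]

/-- The coefficients of `1, c, r, a r` in `Cell.entry a c r`. -/
def Cell.coeff (p : Cell) : Fin 4 → ℤ :=
  (p.sign : ℤ) • (![0, (p.block : ℤ), 0, 0] + p.shape.coeff)

theorem Shape.offset_eq_dotProduct (a : ℤ → ℤ) (c r : ℤ) (s : Shape) :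
    s.offset a c r = s.coeff ⬝ᵥ ![1, c, r, a r] := by
  cases s <;>
    simp only [offset, coeff, dotProduct, Fin.sum_univ_four, Matrix.cons_val] <;> ring

theorem Cell.entry_eq_dotProduct (a : ℤ → ℤ) (c r : ℤ) (p : Cell) :
    p.entry a c r = p.coeff ⬝ᵥ ![1, c, r, a r] := by
  rw [coeff, smul_dotProduct, add_dotProduct, ← Shape.offset_eq_dotProduct]
  simp [entry]

theorem sum_entry_eq_zero {ι : Type*} {s : Finset ι} {p : ι → Cell}
    (hp : ∑ k ∈ s, (p k).coeff = 0) (a : ℤ → ℤ) (c r : ℤ) :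
    ∑ k ∈ s, (p k).entry a c r = 0 := by
  simp_rw [Cell.entry_eq_dotProduct, ← sum_dotProduct, hp, zero_dotProduct]

/-- A blueprint for families of `m × n` arrays of any size `c` for which a Skolem sequence of
order `c` exists. -/
abbrev Template (m n : ℕ) : Type := Matrix (Fin m) (Fin n) Cell

namespace Template

variable {m n : ℕ} (T : Template m n)

/-- The array of index `r ∈ {1, …, c}` built from a template. -/
def array (a : ℤ → ℤ) (c r : ℤ) : Matrix (Fin m) (Fin n) ℤ :=
  T.map (Cell.entry a c r)

/-- Some cell has block `b` and shape `s`. -/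
def Has (b : ℕ) (s : Shape) : Prop :=
  ∃ i j, (T i j).block = b ∧ (T i j).shape = s

/-- The cells of the template fill the block `b`. -/
def CoversBlock (b : ℕ) : Prop :=
  T.Has b .up ∨ T.Has b .down

/-- The cells of the template fill the double block formed by the blocks `b` and `b + 1`. -/
def CoversDoubleBlock (b : ℕ) : Prop :=
  (T.Has b .odd ∨ T.Has b .oddDown) ∧ (T.Has b .even ∨ T.Has b .evenDown) ∨
    T.Has b .fst ∧ T.Has b .snd

/-- Each of the first `m * n` blocks is filled, alone or as part of a double block. For
`b = 0` the truncated subtraction leaves only `d = 0`. -/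
def Covers : Prop :=
  ∀ b < m * n, T.CoversBlock b ∨ ∃ d ∈ Finset.Icc (b - 1) b, T.CoversDoubleBlock d

instance (b : ℕ) (s : Shape) : Decidable (T.Has b s) :=
  inferInstanceAs (Decidable (∃ i j, (T i j).block = b ∧ (T i j).shape = s))

instance (b : ℕ) : Decidable (T.CoversBlock b) :=
  inferInstanceAs (Decidable (_ ∨ _))

instance (b : ℕ) : Decidable (T.CoversDoubleBlock b) :=
  inferInstanceAs (Decidable (_ ∧ _ ∨ _ ∧ _))

instance : Decidable T.Covers :=
  inferInstanceAs (Decidable (∀ b < m * n, _ ∨ ∃ d ∈ Finset.Icc (b - 1) b, _))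

/-- The linear forms in `1, c, r, a r` of the cells sum to zero along each row and column, so that
the arrays built from the template have vanishing line sums. -/
def IsBalanced : Prop :=
  (∀ i, ∑ j, (T i j).coeff = 0) ∧ ∀ j, ∑ i, (T i j).coeff = 0

instance : Decidable T.IsBalanced :=
  inferInstanceAs (Decidable (_ ∧ _))

/-- `x` is the absolute value of some entry of the `c` arrays. -/
def Attains (a : ℤ → ℤ) (c x : ℤ) : Prop :=
  ∃ r ∈ Finset.Icc 1 c, ∃ i j, |T.array a c r i j| = x

variable {T} {a : ℤ → ℤ} {c : ℤ} {b : ℕ}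

theorem Has.attains {s : Shape} (h : T.Has b s) {r y : ℤ} (hr : r ∈ Finset.Icc 1 c)
    (hy : 0 ≤ y) (hs : s.offset a c r = y) : T.Attains a c (b * c + y) := by
  obtain ⟨i, j, rfl, rfl⟩ := h
  have hc : 0 ≤ c := by have := Finset.mem_Icc.mp hr; omega
  refine ⟨r, hr, i, j, ?_⟩
  rw [array, Matrix.map_apply, Cell.entry, hs, abs_mul, Int.isUnit_iff_abs_eq.mp (Units.isUnit _),
    one_mul, abs_of_nonneg (by positivity)]

theorem CoversBlock.attains (h : T.CoversBlock b) {y : ℤ} (hy : y ∈ Finset.Icc 1 c) :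
    T.Attains a c (b * c + y) := by
  rw [Finset.mem_Icc] at hy
  rcases h with h | h
  · exact h.attains (r := y) (Finset.mem_Icc.mpr hy) (by omega) rfl
  · exact h.attains (r := c + 1 - y) (Finset.mem_Icc.mpr (by omega)) (by omega)
      (sub_sub_cancel _ _)

theorem CoversDoubleBlock.attains (h : T.CoversDoubleBlock b) (ha : IsSkolem c a) {y : ℤ}
    (hy : y ∈ Finset.Icc 1 (2 * c)) : T.Attains a c (b * c + y) := by
  have hy' := Finset.mem_Icc.mp hy
  rcases h with ⟨hodd, heven⟩ | ⟨hfst, hsnd⟩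
  · rcases Int.even_or_odd' y with ⟨k, rfl | rfl⟩
    · rcases heven with h | h
      · exact h.attains (r := k) (by grind) (by omega) rfl
      · exact h.attains (r := c + 1 - k) (by grind) (by omega) (by grind [Shape.offset])
    · rcases hodd with h | h
      · exact h.attains (r := k + 1) (by grind) (by omega) (by grind [Shape.offset])
      · exact h.attains (r := c - k) (by grind) (by omega) (by grind [Shape.offset])
  · obtain ⟨r, hr, h | h⟩ := ha y hy
    · exact hfst.attains hr (by omega) h
    · exact hsnd.attains hr (by omega) h

theorem Covers.attains (hT : T.Covers) (ha : IsSkolem c a) {x : ℤ}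
    (hx : x ∈ Finset.Icc 1 (m * n * c)) : T.Attains a c x := by
  obtain ⟨hx1, hx2⟩ := Finset.mem_Icc.mp hx
  have hc : 0 < c := pos_of_mul_pos_right (by omega : 0 < (m * n : ℤ) * c) (by positivity)
  obtain ⟨b, hb⟩ : ∃ b : ℕ, (x - 1) / c = b :=
    Int.eq_ofNat_of_zero_le (Int.ediv_nonneg (by omega) hc.le)
  have hbmn : b < m * n := by
    exact_mod_cast hb ▸ Int.ediv_lt_of_lt_mul hc (by omega : x - 1 < m * n * c)
  obtain ⟨y, hy, rfl⟩ : ∃ y ∈ Finset.Icc 1 c, x = b * c + y := by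
    have hdiv := Int.ediv_mul_add_emod (x - 1) c
    have hnonneg := Int.emod_nonneg (x - 1) hc.ne'
    have hlt := Int.emod_lt_of_pos (x - 1) hc
    exact ⟨(x - 1) % c + 1, Finset.mem_Icc.mpr (by omega), by rw [← hb]; omega⟩
  rw [Finset.mem_Icc] at hy
  rcases hT b hbmn with h | ⟨d, hd, h⟩
  · exact h.attains (Finset.mem_Icc.mpr hy)
  · rw [Finset.mem_Icc] at hd
    rcases (by omega : b = d ∨ b = d + 1) with rfl | rfl
    · exact h.attains ha (Finset.mem_Icc.mpr (by omega))
    · rw [show ((d + 1 : ℕ) : ℤ) * c + y = d * c + (c + y) by push_cast; ring]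
      exact h.attains ha (Finset.mem_Icc.mpr (by omega))

theorem Covers.isIHS (hT : T.Covers) (hbal : T.IsBalanced) {c : ℕ} (ha : IsSkolem c a) :
    IsIHS m n c fun l => T.array a c (l + 1) := by
  refine .of_forall_exists_abs_eq (fun x hx => ?_)
    (fun l i => sum_entry_eq_zero (hbal.1 i) a c (l + 1))
    fun l j => sum_entry_eq_zero (hbal.2 j) a c (l + 1)
  obtain ⟨r, hr, i, j, h⟩ := hT.attains ha hx
  rw [Finset.mem_Icc] at hr
  lift r to ℕ using by omega
  obtain ⟨k, rfl⟩ : ∃ k, r = k + 1 := ⟨r - 1, by omega⟩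
  exact ⟨⟨k, by omega⟩, i, j, by exact_mod_cast h⟩

end Template

open Shape in
/-- The template of the `9 × 7` arrays, with the cells written as `⟨sign, block, shape⟩`. -/
def nineSeven : Template 9 7 :=
  !![⟨1, 13, up⟩, ⟨1, 39, fst⟩, ⟨-1, 39, snd⟩, ⟨-1, 4, down⟩,
       ⟨1, 8, down⟩, ⟨1, 12, up⟩, ⟨-1, 29, up⟩;
     ⟨-1, 14, snd⟩, ⟨1, 42, up⟩, ⟨1, 14, fst⟩, ⟨-1, 56, up⟩,
       ⟨1, 7, up⟩, ⟨1, 23, down⟩, ⟨-1, 16, down⟩;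
     ⟨1, 10, fst⟩, ⟨-1, 10, snd⟩, ⟨1, 28, up⟩, ⟨1, 17, up⟩,
       ⟨-1, 30, up⟩, ⟨-1, 18, down⟩, ⟨1, 3, down⟩;
     ⟨1, 35, down⟩, ⟨-1, 52, down⟩, ⟨1, 24, up⟩, ⟨1, 5, oddDown⟩,
       ⟨-1, 51, down⟩, ⟨-1, 0, down⟩, ⟨1, 38, down⟩;
     ⟨1, 1, up⟩, ⟨1, 2, down⟩, ⟨-1, 31, up⟩, ⟨1, 32, down⟩,
       ⟨-1, 5, evenDown⟩, ⟨1, 55, up⟩, ⟨-1, 54, up⟩;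
     ⟨-1, 21, down⟩, ⟨1, 59, up⟩, ⟨-1, 22, down⟩, ⟨-1, 20, up⟩,
       ⟨1, 34, down⟩, ⟨-1, 48, odd⟩, ⟨1, 19, up⟩;
     ⟨1, 45, down⟩, ⟨-1, 61, up⟩, ⟨1, 25, up⟩, ⟨1, 62, up⟩,
       ⟨1, 27, down⟩, ⟨-1, 50, up⟩, ⟨-1, 48, evenDown⟩;
     ⟨-1, 36, down⟩, ⟨-1, 60, down⟩, ⟨-1, 57, up⟩, ⟨1, 9, up⟩,
       ⟨1, 47, down⟩, ⟨1, 53, up⟩, ⟨1, 43, oddDown⟩;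
     ⟨-1, 33, up⟩, ⟨1, 41, down⟩, ⟨1, 58, down⟩, ⟨-1, 46, down⟩,
       ⟨-1, 37, down⟩, ⟨-1, 26, up⟩, ⟨1, 43, even⟩]

set_option maxRecDepth 10000 in
theorem nineSeven_covers : nineSeven.Covers := by
  decide

set_option maxRecDepth 10000 in
theorem nineSeven_isBalanced : nineSeven.IsBalanced := by
  decide

theorem exists_IHS_nine_seven_general (c : ℕ) (hc : c % 4 = 0 ∨ c % 4 = 1) :
    ∃ A : Fin c → Matrix (Fin 9) (Fin 7) ℤ, IsIHS 9 7 c A := by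
  obtain ⟨a, ha⟩ : ∃ a, IsSkolem c a := exists_isSkolem (by omega)
  exact ⟨_, nineSeven_covers.isIHS nineSeven_isBalanced ha⟩

theorem exists_IHS_nine_seven
    (c : ℕ) (hc : 0 < c) (hcmod : c % 4 = 1) :
    ∃ A : Fin c → Matrix (Fin 9) (Fin 7) ℤ, IsIHS 9 7 c A :=
  exists_IHS_nine_seven_general c (.inr hcmod)
end

section
/- For every positive integer c with c ≡ 3 (mod 4), there exists an integer Heffter array set IHS(7, 7; c). -/
/-!
By counting, an array family with zero line sums is a Heffter array set as soon as every integer of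
`{1, …, mnc}` occurs in it up to sign.

Write `c = 4n - 1`. Outside a `4 × 4` corner, each cell of the `l`-th array runs, as `l` varies,
through a signed arithmetic progression of length `c` and difference `±1` or `±2`. These
progressions exhaust `{1, …, 32c}` and the numbers `32c + 2, 32c + 4, …, 34c`, and their signs,
starting points and differences cancel along every row and column. The corner receives `4 × 4`
arrays with equally many positive and negative entries in each line, so that moving all entries away
from `0` by the same amount does not disturb the zero sums. For `l < n` the corner is an array with
absolute values `1, 3, 5, 7` and `1, …, 12`, the two groups being moved independently, and for
`n ≤ l` one with absolute values `1, …, 16`. The first group uses up the `4n` numbers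
`32c + 1, 32c + 3, …, 34c + 1`, and the others exhaust `{34c + 2, …, 49c}`, since
`12n + 16(c - n) = 15c - 1`.
-/

open Finset Matrix

section Counting

variable {m n c : ℕ}

theorem isIHS_of_forall_exists_abs_eq {A : Fin c → Matrix (Fin m) (Fin n) ℤ}
    (hrow : ∀ l i, ∑ j, A l i j = 0) (hcol : ∀ l j, ∑ i, A l i j = 0)
    (hcover : ∀ x ∈ Icc (1 : ℤ) (m * n * c), ∃ l i j, |A l i j| = x) : IsIHS m n c A := by
  let f : Fin c × Fin m × Fin n → ℤ := fun p => |A p.1 p.2.1 p.2.2|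
  have hsub : Icc (1 : ℤ) (m * n * c) ⊆ univ.image f := fun x hx => by
    obtain ⟨l, i, j, h⟩ := hcover x hx
    exact mem_image.2 ⟨(l, i, j), mem_univ _, h⟩
  have hcard : #(univ : Finset (Fin c × Fin m × Fin n)) = #(Icc (1 : ℤ) (m * n * c)) := by
    simp only [card_univ, Fintype.card_prod, Fintype.card_fin, Int.card_Icc, add_sub_cancel_right]
    rw [mul_comm c]
    exact_mod_cast (Int.toNat_natCast (m * n * c)).symm
  have himage : Icc (1 : ℤ) (m * n * c) = univ.image f :=
    eq_of_subset_of_card_le hsub (hcard ▸ card_image_le)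
  refine ⟨?_, fun x => ⟨fun hx => hcover x (mem_Icc.2 hx), ?_⟩, hrow, hcol⟩
  · have hinj : Set.InjOn f (univ : Finset (Fin c × Fin m × Fin n)) :=
      card_image_iff.1 (himage ▸ hcard.symm)
    exact Set.injOn_univ.1 (by simpa only [coe_univ] using hinj)
  · rintro ⟨l, i, j, rfl⟩
    exact mem_Icc.1 (himage ▸ mem_image_of_mem f (mem_univ (l, i, j)))

theorem isIHS_reindex_of_forall_exists_abs_eq {ι κ : Type*} [Fintype ι] [Fintype κ]
    (e : ι ≃ Fin m) (f : κ ≃ Fin n) {A : Fin c → Matrix ι κ ℤ}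
    (hrow : ∀ l i, ∑ j, A l i j = 0) (hcol : ∀ l j, ∑ i, A l i j = 0)
    (hcover : ∀ x ∈ Icc (1 : ℤ) (m * n * c), ∃ l i j, |A l i j| = x) :
    IsIHS m n c fun l => reindex e f (A l) := by
  refine isIHS_of_forall_exists_abs_eq (fun l i => ?_) (fun l j => ?_) fun x hx => ?_
  · exact (f.symm.sum_comp fun j => A l (e.symm i) j).trans (hrow l _)
  · exact (e.symm.sum_comp fun i => A l i (f.symm j)).trans (hcol l _)
  · obtain ⟨l, i, j, h⟩ := hcover x hx
    exact ⟨l, e i, f j, by simpa only [reindex_apply, submatrix_apply, Equiv.symm_apply_apply]⟩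

end Counting

theorem exists_eq_add_mul_of_mem_Ioc {s w N x : ℤ} (hw : 0 < w) (hx : x ∈ Ioc s (s + w * N)) :
    ∃ a ∈ Icc 1 w, ∃ k ∈ Ico 0 N, x = s + a + w * k := by
  rw [mem_Ioc] at hx
  have hdiv : (x - s - 1) % w + w * ((x - s - 1) / w) = x - s - 1 := Int.emod_add_mul_ediv _ _
  have hnonneg : 0 ≤ (x - s - 1) % w := Int.emod_nonneg _ hw.ne'
  have hlt : (x - s - 1) % w < w := Int.emod_lt_of_pos _ hw
  refine ⟨(x - s - 1) % w + 1, mem_Icc.2 ⟨by lia, by lia⟩, (x - s - 1) / w,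
    mem_Ico.2 ⟨Int.ediv_nonneg (by lia) hw.le, ?_⟩, by lia⟩
  exact Int.ediv_lt_of_lt_mul hw (by lia)

/-- Translation by `t` away from `0`: adds `t` to the absolute value of `x` and keeps its sign.
The value `0`, which stands for an empty cell, stays put. -/
def shiftAbs (t x : ℤ) : ℤ := x + x.sign * t

section ShiftAbs

variable {t x : ℤ}

@[simp]
theorem shiftAbs_zero_right (t : ℤ) : shiftAbs t 0 = 0 := by simp [shiftAbs]

theorem abs_shiftAbs (ht : 0 ≤ t) (hx : x ≠ 0) : |shiftAbs t x| = |x| + t := by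
  rcases hx.lt_or_gt with hneg | hpos
  · rw [shiftAbs, Int.sign_eq_neg_one_of_neg hneg, abs_of_neg hneg, abs_of_neg (by lia)]
    ring
  · rw [shiftAbs, Int.sign_eq_one_of_pos hpos, abs_of_pos hpos, abs_of_pos (by lia)]
    ring

theorem sum_shiftAbs {ι : Type*} (s : Finset ι) (t : ℤ) (f : ι → ℤ) :
    ∑ i ∈ s, shiftAbs t (f i) = ∑ i ∈ s, f i + (∑ i ∈ s, (f i).sign) * t := by
  simp only [shiftAbs, sum_add_distrib, sum_mul]

end ShiftAbs

/-- The signed arithmetic progression followed by one cell of the frame: for `c` arrays, its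
absolute values are `|first| + block * c + step * k` for `0 ≤ k < c`, in increasing or decreasing
order, all with the sign of `first`. An empty cell has `first = 0`. -/
structure SignedRun where
  first : ℤ
  block : ℤ
  step : ℤ
  descending : Bool

namespace SignedRun

instance : Zero SignedRun := ⟨⟨0, 0, 0, false⟩⟩

instance : Neg SignedRun := ⟨fun ρ => { ρ with first := -ρ.first }⟩

/-- The increasing run through the integers of `(bc, (b + 1)c]`. -/
def asc (b : ℤ) : SignedRun := ⟨1, b, 1, false⟩

/-- The decreasing run through the integers of `(bc, (b + 1)c]`. -/
def desc (b : ℤ) : SignedRun := ⟨1, b, 1, true⟩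

/-- The increasing run through every other integer of `(bc, (b + 2)c]`, from `bc + a`,
`a = 1, 2`. -/
def asc₂ (b a : ℤ) : SignedRun := ⟨a, b, 2, false⟩

/-- The decreasing run through every other integer of `(bc, (b + 2)c]`, down to `bc + a`,
`a = 1, 2`. -/
def desc₂ (b a : ℤ) : SignedRun := ⟨a, b, 2, true⟩

/-- The term with index `l` of a run of length `c`. -/
def entry (c l : ℤ) (ρ : SignedRun) : ℤ :=
  shiftAbs (ρ.block * c + ρ.step * if ρ.descending then c - 1 - l else l) ρ.first

theorem entry_eq_add (c l : ℤ) (ρ : SignedRun) :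
    ρ.entry c l = ρ.entry 0 0 + (ρ.entry 1 0 - ρ.entry 0 0) * c
      + (ρ.entry 0 1 - ρ.entry 0 0) * l := by
  simp only [entry, shiftAbs]
  split <;> ring

theorem sum_entry_eq_zero {ι : Type*} {s : Finset ι} {ρ : ι → SignedRun}
    (h00 : ∑ i ∈ s, (ρ i).entry 0 0 = 0) (h10 : ∑ i ∈ s, (ρ i).entry 1 0 = 0)
    (h01 : ∑ i ∈ s, (ρ i).entry 0 1 = 0) (c l : ℤ) : ∑ i ∈ s, (ρ i).entry c l = 0 := by
  simp only [fun i => entry_eq_add c l (ρ i), sum_add_distrib, sum_sub_distrib, ← sum_mul, h00,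
    h10, h01, sub_zero, zero_mul, add_zero]

theorem entry_of_first_eq_zero {ρ : SignedRun} (h : ρ.first = 0) (c l : ℤ) : ρ.entry c l = 0 := by
  rw [entry, h, shiftAbs_zero_right]

theorem exists_abs_entry_eq {ρ : SignedRun} (hfirst : ρ.first ≠ 0) (hblock : 0 ≤ ρ.block)
    (hstep : 0 ≤ ρ.step) {c k : ℤ} (hk : k ∈ Ico 0 c) :
    ∃ l ∈ Ico 0 c, |ρ.entry c l| = |ρ.first| + ρ.block * c + ρ.step * k := by
  rw [mem_Ico] at hk
  have ht : 0 ≤ ρ.block * c + ρ.step * k :=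
    add_nonneg (mul_nonneg hblock (hk.1.trans hk.2.le)) (mul_nonneg hstep hk.1)
  refine ⟨if ρ.descending then c - 1 - k else k, by rw [mem_Ico]; split <;> lia, ?_⟩
  rw [add_assoc, ← abs_shiftAbs ht hfirst, entry]
  split <;> simp only [sub_sub_cancel]

end SignedRun

section Frame

open SignedRun

/-- The cells of the arrays outside the lower right `4 × 4` corner, which is left empty. -/
def frame : Matrix (Fin 3 ⊕ Fin 4) (Fin 3 ⊕ Fin 4) SignedRun :=
  fromBlocks
    !![-desc₂ 18 2, -asc 11, desc 28;
      desc 25, asc₂ 13 2, -asc 23;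
      desc 8, -asc 0, -desc₂ 21 1]
    !![asc₂ 32 2, -asc₂ 18 1, desc 4, -desc 16;
      -asc 20, -desc 10, -desc₂ 6 2, desc₂ 21 2;
      -asc 12, asc 29, desc 2, -desc 5]
    !![-desc₂ 6 1, -asc 24, desc 31;
      -asc₂ 26 2, asc 9, asc 17;
      desc 3, asc₂ 26 1, -asc 30;
      asc 15, -asc₂ 13 1, -desc 1]
    0

theorem sum_entry_frame_row (c l : ℤ) (i : Fin 3 ⊕ Fin 4) : ∑ j, (frame i j).entry c l = 0 :=
  have h00 : ∀ i, ∑ j, (frame i j).entry 0 0 = 0 := by decide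
  have h10 : ∀ i, ∑ j, (frame i j).entry 1 0 = 0 := by decide
  have h01 : ∀ i, ∑ j, (frame i j).entry 0 1 = 0 := by decide
  sum_entry_eq_zero (h00 i) (h10 i) (h01 i) c l

theorem sum_entry_frame_col (c l : ℤ) (j : Fin 3 ⊕ Fin 4) : ∑ i, (frame i j).entry c l = 0 :=
  have h00 : ∀ j, ∑ i, (frame i j).entry 0 0 = 0 := by decide
  have h10 : ∀ j, ∑ i, (frame i j).entry 1 0 = 0 := by decide
  have h01 : ∀ j, ∑ i, (frame i j).entry 0 1 = 0 := by decide
  sum_entry_eq_zero (h00 j) (h10 j) (h01 j) c l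

/-- A block is exhausted by one run with step `1`, or together with a neighbour by two runs with
step `2`; `b - e` is where the runs through block `b` begin. -/
theorem exists_frame_steps : ∀ b ∈ Ico (0 : ℤ) 32, ∃ w ∈ Icc (1 : ℤ) 2, ∃ e ∈ Ico 0 w,
    0 ≤ b - e ∧ ∀ a ∈ Icc 1 w, ∃ i j,
      |(frame i j).first| = a ∧ (frame i j).block = b - e ∧ (frame i j).step = w := by
  decide

theorem exists_abs_entry_frame_eq_of_le {c x : ℤ} (hc : 0 < c) (hx : x ∈ Ioc 0 (32 * c)) :
    ∃ l ∈ Ico 0 c, ∃ i j, (frame i j).first ≠ 0 ∧ |(frame i j).entry c l| = x := by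
  rw [mem_Ioc] at hx
  obtain ⟨r, hr, b, hb, rfl⟩ : ∃ r ∈ Icc 1 c, ∃ b ∈ Ico (0 : ℤ) 32, x = 0 + r + c * b :=
    exists_eq_add_mul_of_mem_Ioc hc (mem_Ioc.2 ⟨hx.1, by lia⟩)
  obtain ⟨w, hw, e, he, hbe, hruns⟩ := exists_frame_steps b hb
  rw [mem_Icc] at hr hw
  rw [mem_Ico] at he
  obtain ⟨a, ha, k, hk, hak⟩ : ∃ a ∈ Icc 1 w, ∃ k ∈ Ico 0 c, r + e * c = 0 + a + w * k :=
    exists_eq_add_mul_of_mem_Ioc hw.1 (mem_Ioc.2 ⟨by nlinarith, by nlinarith⟩)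
  obtain ⟨i, j, hfirst, hblock, hstep⟩ := hruns a ha
  have hne : (frame i j).first ≠ 0 := abs_pos.1 (by rw [mem_Icc] at ha; lia)
  obtain ⟨l, hl, habs⟩ := exists_abs_entry_eq hne (by lia) (by lia) hk
  refine ⟨l, hl, i, j, hne, ?_⟩
  rw [habs, hfirst, hblock, hstep]
  linear_combination -hak

theorem exists_abs_entry_frame_eq_add {c k : ℤ} (hk : k ∈ Ico 0 c) :
    ∃ l ∈ Ico 0 c, ∃ i j, (frame i j).first ≠ 0 ∧
      |(frame i j).entry c l| = 32 * c + 2 + 2 * k := by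
  obtain ⟨l, hl, habs⟩ :=
    exists_abs_entry_eq (ρ := asc₂ 32 2) (by decide) (by decide) (by decide) hk
  refine ⟨l, hl, Sum.inl 0, Sum.inr 0, by decide, habs.trans ?_⟩
  simp only [asc₂, Nat.abs_ofNat]
  ring

end Frame

/-- The `2 × 2` part of the corner array for small indices, `0` marking the other cells. -/
def oddCore : Matrix (Fin 4) (Fin 4) ℤ :=
  !![ 1, -3,  0,  0;
     -5,  7,  0,  0;
      0,  0,  0,  0;
      0,  0,  0,  0]

/-- The complement of the `2 × 2` part of the corner array for small indices; the lines of
`oddCore + twelveCore` sum to `0`. -/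
def twelveCore : Matrix (Fin 4) (Fin 4) ℤ :=
  !![ 0,   0, -1,   3;
      0,   0,  2,  -4;
     -5, -12,  6,  11;
      9,   8, -7, -10]

theorem oddCore_mul_twelveCore (i j : Fin 4) : oddCore i j * twelveCore i j = 0 := by
  decide +revert

/-- A `4 × 4` array with zero line sums and balanced signs on `1, …, 16`, the corner array for
large indices up to translation. -/
def sixteenCore : Matrix (Fin 4) (Fin 4) ℤ :=
  !![ 1,  -2,  -5,   6;
     -3,   4,   7,  -8;
     -9,  10,  13, -14;
     11, -12, -15,  16]

/-- The `4 × 4` corner of the `l`-th array for `c = 4n - 1`. Each translation starts where that of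
the preceding corner ends, so that no absolute value is skipped or repeated. -/
def core (n l : ℤ) : Matrix (Fin 4) (Fin 4) ℤ :=
  if l < n then
    oddCore.map (shiftAbs (32 * (4 * n - 1) + 8 * l))
      + twelveCore.map (shiftAbs (34 * (4 * n - 1) + 1 + 12 * l))
  else
    sixteenCore.map (shiftAbs (34 * (4 * n - 1) + 1 + 12 * n + 16 * (l - n)))

section Core

variable {n l : ℤ}

theorem sum_core_row (n l : ℤ) (i : Fin 4) : ∑ j, core n l i j = 0 := by
  have hodd : ∀ i, ∑ j, (oddCore i j).sign = 0 := by decide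
  have htwelve : ∀ i, ∑ j, (twelveCore i j).sign = 0 := by decide
  have hsmall : ∀ i, ∑ j, oddCore i j + ∑ j, twelveCore i j = 0 := by decide
  have hsixteen : ∀ i, ∑ j, (sixteenCore i j).sign = 0 := by decide
  have hlarge : ∀ i, ∑ j, sixteenCore i j = 0 := by decide
  unfold core
  split <;> simp only [Matrix.add_apply, map_apply, sum_add_distrib, sum_shiftAbs, hodd, htwelve,
    hsmall, hsixteen, hlarge, zero_mul, add_zero]

theorem sum_core_col (n l : ℤ) (j : Fin 4) : ∑ i, core n l i j = 0 := by
  have hodd : ∀ j, ∑ i, (oddCore i j).sign = 0 := by decide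
  have htwelve : ∀ j, ∑ i, (twelveCore i j).sign = 0 := by decide
  have hsmall : ∀ j, ∑ i, oddCore i j + ∑ i, twelveCore i j = 0 := by decide
  have hsixteen : ∀ j, ∑ i, (sixteenCore i j).sign = 0 := by decide
  have hlarge : ∀ j, ∑ i, sixteenCore i j = 0 := by decide
  unfold core
  split <;> simp only [Matrix.add_apply, map_apply, sum_add_distrib, sum_shiftAbs, hodd, htwelve,
    hsmall, hsixteen, hlarge, zero_mul, add_zero]

theorem exists_abs_core_eq_of_odd (hl : l ∈ Ico 0 n) {a : ℤ} (ha : a ∈ Icc 1 8) (hodd : Odd a) :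
    ∃ i j, |core n l i j| = 32 * (4 * n - 1) + a + 8 * l := by
  have hcells : ∀ a ∈ Icc (1 : ℤ) 8, Odd a → ∃ i j, |oddCore i j| = a := by decide
  obtain ⟨i, j, habs⟩ := hcells a ha hodd
  rw [mem_Icc] at ha
  rw [mem_Ico] at hl
  have hzero : twelveCore i j = 0 :=
    (mul_eq_zero.1 (oddCore_mul_twelveCore i j)).resolve_left (abs_pos.1 (by lia))
  refine ⟨i, j, ?_⟩
  rw [core, if_pos hl.2, Matrix.add_apply, map_apply, map_apply, hzero, shiftAbs_zero_right,
    add_zero, abs_shiftAbs (by lia) (abs_pos.1 (by lia)), habs]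
  ring

theorem exists_abs_core_eq_of_lt (hl : l ∈ Ico 0 n) {a : ℤ} (ha : a ∈ Icc 1 12) :
    ∃ i j, |core n l i j| = 34 * (4 * n - 1) + 1 + a + 12 * l := by
  have hcells : ∀ a ∈ Icc (1 : ℤ) 12, ∃ i j, |twelveCore i j| = a := by decide
  obtain ⟨i, j, habs⟩ := hcells a ha
  rw [mem_Icc] at ha
  rw [mem_Ico] at hl
  have hzero : oddCore i j = 0 :=
    (mul_eq_zero.1 (oddCore_mul_twelveCore i j)).resolve_right (abs_pos.1 (by lia))
  refine ⟨i, j, ?_⟩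
  rw [core, if_pos hl.2, Matrix.add_apply, map_apply, map_apply, hzero, shiftAbs_zero_right,
    zero_add, abs_shiftAbs (by lia) (abs_pos.1 (by lia)), habs]
  ring

theorem exists_abs_core_eq_of_le (hn : 0 < n) (hl : n ≤ l) {a : ℤ} (ha : a ∈ Icc 1 16) :
    ∃ i j, |core n l i j| = 34 * (4 * n - 1) + 1 + 12 * n + a + 16 * (l - n) := by
  have hcells : ∀ a ∈ Icc (1 : ℤ) 16, ∃ i j, |sixteenCore i j| = a := by decide
  obtain ⟨i, j, habs⟩ := hcells a ha
  rw [mem_Icc] at ha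
  refine ⟨i, j, ?_⟩
  rw [core, if_neg hl.not_gt, map_apply, abs_shiftAbs (by lia) (abs_pos.1 (by lia)), habs]
  ring

end Core

/-- The `l`-th array of the set for `c = 4n - 1`, `0 ≤ l < c`, with rows and columns indexed by
`Fin 3 ⊕ Fin 4` to separate the frame from the corner. -/
def heffterArray (n l : ℤ) : Matrix (Fin 3 ⊕ Fin 4) (Fin 3 ⊕ Fin 4) ℤ :=
  frame.map (SignedRun.entry (4 * n - 1) l) + fromBlocks 0 0 0 (core n l)

section HeffterArray

variable {n x : ℤ}

theorem heffterArray_of_first_ne_zero {i j : Fin 3 ⊕ Fin 4} (h : (frame i j).first ≠ 0) (n l : ℤ) :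
    heffterArray n l i j = (frame i j).entry (4 * n - 1) l := by
  rcases i with i | i <;> rcases j with j | j
  · exact add_zero _
  · exact add_zero _
  · exact add_zero _
  · exact absurd rfl h

theorem heffterArray_inr_inr (n l : ℤ) (i j : Fin 4) :
    heffterArray n l (Sum.inr i) (Sum.inr j) = core n l i j := by
  simp only [heffterArray, Matrix.add_apply, map_apply, fromBlocks_apply₂₂]
  rw [SignedRun.entry_of_first_eq_zero rfl, zero_add]

theorem sum_heffterArray_row (n l : ℤ) (i : Fin 3 ⊕ Fin 4) : ∑ j, heffterArray n l i j = 0 := by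
  simp only [heffterArray, Matrix.add_apply, map_apply, sum_add_distrib, sum_entry_frame_row,
    zero_add]
  rcases i with i | i <;> simp [sum_core_row]

theorem sum_heffterArray_col (n l : ℤ) (j : Fin 3 ⊕ Fin 4) : ∑ i, heffterArray n l i j = 0 := by
  simp only [heffterArray, Matrix.add_apply, map_apply, sum_add_distrib, sum_entry_frame_col,
    zero_add]
  rcases j with j | j <;> simp [sum_core_col]

theorem exists_abs_heffterArray_eq_of_frame {l : ℤ}
    (h : ∃ i j, (frame i j).first ≠ 0 ∧ |(frame i j).entry (4 * n - 1) l| = x) :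
    ∃ i j, |heffterArray n l i j| = x := by
  obtain ⟨i, j, hne, habs⟩ := h
  exact ⟨i, j, by rw [heffterArray_of_first_ne_zero hne, habs]⟩

theorem exists_abs_heffterArray_eq_of_core {l : ℤ} (h : ∃ i j, |core n l i j| = x) :
    ∃ i j, |heffterArray n l i j| = x := by
  obtain ⟨i, j, habs⟩ := h
  exact ⟨Sum.inr i, Sum.inr j, by rw [heffterArray_inr_inr, habs]⟩

theorem exists_abs_heffterArray_eq_of_mem_Ioc_zero (hn : 0 < n)
    (hx : x ∈ Ioc 0 (32 * (4 * n - 1))) :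
    ∃ l ∈ Ico 0 (4 * n - 1), ∃ i j, |heffterArray n l i j| = x := by
  obtain ⟨l, hl, h⟩ := exists_abs_entry_frame_eq_of_le (by lia) hx
  exact ⟨l, hl, exists_abs_heffterArray_eq_of_frame h⟩

theorem exists_abs_heffterArray_eq_of_mem_Ioc_thirtyTwo
    (hx : x ∈ Ioc (32 * (4 * n - 1)) (34 * (4 * n - 1) + 1)) :
    ∃ l ∈ Ico 0 (4 * n - 1), ∃ i j, |heffterArray n l i j| = x := by
  rw [mem_Ioc] at hx
  obtain ⟨a, ha, l, hl, rfl⟩ : ∃ a ∈ Icc (1 : ℤ) 8, ∃ l ∈ Ico 0 n,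
      x = 32 * (4 * n - 1) + a + 8 * l :=
    exists_eq_add_mul_of_mem_Ioc (by decide) (mem_Ioc.2 ⟨hx.1, by lia⟩)
  rcases Int.even_or_odd' a with ⟨k, rfl | rfl⟩
  · have hk : k - 1 + 4 * l ∈ Ico 0 (4 * n - 1) := by
      rw [mem_Icc] at ha
      rw [mem_Ico] at hl ⊢
      lia
    obtain ⟨l', hl', h⟩ := exists_abs_entry_frame_eq_add hk
    rw [show 32 * (4 * n - 1) + 2 + 2 * (k - 1 + 4 * l) = 32 * (4 * n - 1) + 2 * k + 8 * l by
      ring] at h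
    exact ⟨l', hl', exists_abs_heffterArray_eq_of_frame h⟩
  · have h := exists_abs_core_eq_of_odd hl ha ⟨k, rfl⟩
    exact ⟨l, by rw [mem_Ico] at hl ⊢; lia, exists_abs_heffterArray_eq_of_core h⟩

theorem exists_abs_heffterArray_eq_of_mem_Ioc_thirtyFour
    (hx : x ∈ Ioc (34 * (4 * n - 1) + 1) (34 * (4 * n - 1) + 1 + 12 * n)) :
    ∃ l ∈ Ico 0 (4 * n - 1), ∃ i j, |heffterArray n l i j| = x := by
  obtain ⟨a, ha, l, hl, rfl⟩ := exists_eq_add_mul_of_mem_Ioc (by decide) hx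
  exact ⟨l, by rw [mem_Ico] at hl ⊢; lia,
    exists_abs_heffterArray_eq_of_core (exists_abs_core_eq_of_lt hl ha)⟩

theorem exists_abs_heffterArray_eq_of_mem_Ioc_add (hn : 0 < n)
    (hx : x ∈ Ioc (34 * (4 * n - 1) + 1 + 12 * n) (49 * (4 * n - 1))) :
    ∃ l ∈ Ico 0 (4 * n - 1), ∃ i j, |heffterArray n l i j| = x := by
  rw [mem_Ioc] at hx
  obtain ⟨a, ha, k, hk, rfl⟩ : ∃ a ∈ Icc (1 : ℤ) 16, ∃ k ∈ Ico 0 (3 * n - 1),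
      x = 34 * (4 * n - 1) + 1 + 12 * n + a + 16 * k :=
    exists_eq_add_mul_of_mem_Ioc (by decide) (mem_Ioc.2 ⟨hx.1, by lia⟩)
  rw [mem_Ico] at hk
  have h := exists_abs_core_eq_of_le hn (l := n + k) (by lia) ha
  rw [add_sub_cancel_left] at h
  exact ⟨n + k, mem_Ico.2 ⟨by lia, by lia⟩, exists_abs_heffterArray_eq_of_core h⟩

theorem exists_abs_heffterArray_eq (hn : 0 < n) (hx : x ∈ Icc 1 (49 * (4 * n - 1))) :
    ∃ l ∈ Ico 0 (4 * n - 1), ∃ i j, |heffterArray n l i j| = x := by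
  rw [mem_Icc] at hx
  rcases le_or_gt x (32 * (4 * n - 1)) with h32 | h32
  · exact exists_abs_heffterArray_eq_of_mem_Ioc_zero hn (mem_Ioc.2 ⟨by lia, h32⟩)
  rcases le_or_gt x (34 * (4 * n - 1) + 1) with h34 | h34
  · exact exists_abs_heffterArray_eq_of_mem_Ioc_thirtyTwo (mem_Ioc.2 ⟨h32, h34⟩)
  rcases le_or_gt x (34 * (4 * n - 1) + 1 + 12 * n) with h | h
  · exact exists_abs_heffterArray_eq_of_mem_Ioc_thirtyFour (mem_Ioc.2 ⟨h34, h⟩)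
  · exact exists_abs_heffterArray_eq_of_mem_Ioc_add hn (mem_Ioc.2 ⟨h, hx.2⟩)

end HeffterArray

theorem exists_IHS_seven_seven
    (c : ℕ) (hc : 0 < c) (hcmod : c % 4 = 3) :
    ∃ A : Fin c → Matrix (Fin 7) (Fin 7) ℤ, IsIHS 7 7 c A := by
  obtain ⟨n, hn⟩ : ∃ n : ℤ, (c : ℤ) = 4 * n - 1 := ⟨(c + 1) / 4, by lia⟩
  refine ⟨_, isIHS_reindex_of_forall_exists_abs_eq finSumFinEquiv finSumFinEquiv
    (A := fun l : Fin c => heffterArray n (l : ℕ)) (fun l => sum_heffterArray_row n _)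
    (fun l => sum_heffterArray_col n _) fun x hx => ?_⟩
  obtain ⟨l, hl, h⟩ : ∃ l ∈ Ico 0 (4 * n - 1), ∃ i j, |heffterArray n l i j| = x :=
    exists_abs_heffterArray_eq (by lia) (by rw [mem_Icc] at hx ⊢; lia)
  rw [← hn, mem_Ico] at hl
  lift l to ℕ using hl.1
  exact ⟨⟨l, by exact_mod_cast hl.2⟩, h⟩
end
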